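/- arXiv:1509.00535 — 6 statements merged into one kernel-verified Lean document; each statement's English description precedes it below -/
import Mathlib

section
/- Let N ≥ 1 and k ≥ 1, and let 𝒬 = (q_1, …, q_{N^k}) be a tuple of vectors in Δ_N with associated k-th order transition matrix Q^(k). Then Q^(k) = M^k_k C^{k+1}_1 B^k_k(𝒬) and Q^(k) = C^k_1 M^k_{k-1} B^k_k(𝒬). -/
open Matrix BigOperators Filter Topology

noncomputable section

/-- Cast a `Fin`-indexed matrix along equalities of the dimensions. -/
def castM {a b a' b' : ℕ} (ha : a = a') (hb : b = b') (A : Matrix (Fin a) (Fin b) ℝ) :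
    Matrix (Fin a') (Fin b') ℝ :=
  Matrix.reindex (finCongr ha) (finCongr hb) A

/-- Kronecker product (row-major convention) of `Fin`-indexed real matrices. -/
def kron {a b c d : ℕ} (A : Matrix (Fin a) (Fin b) ℝ) (B : Matrix (Fin c) (Fin d) ℝ) :
    Matrix (Fin (a * c)) (Fin (b * d)) ℝ :=
  Matrix.of fun i j => A i.divNat j.divNat * B i.modNat j.modNat

/-- Standard basis column vector `e_{n,i}` (as an `n × 1` matrix). -/
def eCol (n : ℕ) (i : Fin n) : Matrix (Fin n) (Fin 1) ℝ :=
  Matrix.of fun r _ => if r = i then (1 : ℝ) else 0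

/-- Standard basis row vector `e_{n,i}ᵀ` (as a `1 × n` matrix). -/
def eRow (n : ℕ) (i : Fin n) : Matrix (Fin 1) (Fin n) ℝ :=
  Matrix.of fun _ c => if c = i then (1 : ℝ) else 0

/-- `E_{n,i} = e_{n,i} e_{n,i}ᵀ`. -/
def EE (n : ℕ) (i : Fin n) : Matrix (Fin n) (Fin n) ℝ :=
  Matrix.of fun r c => if r = i ∧ c = i then (1 : ℝ) else 0

/-- All-ones row vector `1_nᵀ` (as a `1 × n` matrix). -/
def onesRow (n : ℕ) : Matrix (Fin 1) (Fin n) ℝ := Matrix.of fun _ _ => (1 : ℝ)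

/-- A column vector (an `n × 1` matrix) is a simplex vector: nonnegative entries summing to 1. -/
def IsSimplex {n : ℕ} (v : Matrix (Fin n) (Fin 1) ℝ) : Prop :=
  (∀ i, 0 ≤ v i 0) ∧ ∑ i, v i 0 = 1

/-- A matrix is column-stochastic: each column is a simplex vector. -/
def IsColStochastic {a b : ℕ} (A : Matrix (Fin a) (Fin b) ℝ) : Prop :=
  ∀ j, (∀ i, 0 ≤ A i j) ∧ ∑ i, A i j = 1

/-- The (0-based) index `b * i + j` corresponding to the 1-based index `b(i-1)+j`. -/
def pairIdx {a b : ℕ} (i : Fin a) (j : Fin b) : Fin (a * b) :=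
  ⟨b * i.val + j.val, by
    have h : b * (i.val + 1) ≤ b * a := Nat.mul_le_mul le_rfl i.isLt
    have h2 : b * (i.val + 1) = b * i.val + b := by ring
    have h3 : b * a = a * b := Nat.mul_comm b a
    have h4 : j.val < b := j.isLt
    omega⟩

/-- Commutation matrix `C_{n,m} = ∑_i e_{m,i}ᵀ ⊗ E_n ⊗ e_{m,i}`. -/
def commMat (n m : ℕ) : Matrix (Fin (n * m)) (Fin (n * m)) ℝ :=
  ∑ i : Fin m,
    castM (by ring) (by ring)
      (kron (kron (eRow m i) (1 : Matrix (Fin n) (Fin n) ℝ)) (eCol m i))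

/-- Marginalization matrix `M^k_m = E_{N^m} ⊗ 1_Nᵀ ⊗ E_{N^{k-m}}`. -/
def Marg (N k m : ℕ) (hm : m ≤ k) : Matrix (Fin (N ^ k)) (Fin (N ^ (k + 1))) ℝ :=
  castM (by rw [mul_one, ← pow_add]; exact congrArg (N ^ ·) (by omega))
    (by rw [← pow_succ, ← pow_add]; exact congrArg (N ^ ·) (by omega))
    (kron (kron (1 : Matrix (Fin (N ^ m)) (Fin (N ^ m)) ℝ) (onesRow N))
      (1 : Matrix (Fin (N ^ (k - m))) (Fin (N ^ (k - m))) ℝ))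

/-- Branching matrix `B^k_m(𝒬) = ∑_{i,j} E_{N^m,i} ⊗ q_{N^{k-m}(i-1)+j} ⊗ E_{N^{k-m},j}`. -/
def Branch (N k m : ℕ) (hm : m ≤ k) (q : Fin (N ^ k) → Matrix (Fin N) (Fin 1) ℝ) :
    Matrix (Fin (N ^ (k + 1))) (Fin (N ^ k)) ℝ :=
  castM (by rw [← pow_succ, ← pow_add]; exact congrArg (N ^ ·) (by omega))
    (by rw [mul_one, ← pow_add]; exact congrArg (N ^ ·) (by omega))
    (∑ i : Fin (N ^ m), ∑ j : Fin (N ^ (k - m)),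
      kron (kron (EE (N ^ m) i)
          (q (finCongr (by rw [← pow_add]; exact congrArg (N ^ ·) (by omega)) (pairIdx i j))))
        (EE (N ^ (k - m)) j))

/-- Cycling matrix `C^k_m = C_{N^m, N^{k-m}}`. -/
def Cyc (N k m : ℕ) (hm : m ≤ k) : Matrix (Fin (N ^ k)) (Fin (N ^ k)) ℝ :=
  castM (by rw [← pow_add]; exact congrArg (N ^ ·) (by omega))
    (by rw [← pow_add]; exact congrArg (N ^ ·) (by omega))
    (commMat (N ^ m) (N ^ (k - m)))

/-- The block `Q_i` of a tuple `𝒬`: the `N × N` matrix with columns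
`q_{N(i-1)+1}, …, q_{N(i-1)+N}`. -/
def Qblk (N k : ℕ) (hk : 1 ≤ k) (q : Fin (N ^ k) → Matrix (Fin N) (Fin 1) ℝ)
    (i : Fin (N ^ (k - 1))) : Matrix (Fin N) (Fin N) ℝ :=
  Matrix.of fun r c =>
    q (finCongr (by rw [← pow_succ]; exact congrArg (N ^ ·) (by omega)) (pairIdx i c)) r 0

/-- The k-th order transition matrix `Q^(k) = C_{N,N^{k-1}} ∑_i E_{N^{k-1},i} ⊗ Q_i`. -/
def TransMat (N k : ℕ) (hk : 1 ≤ k) (q : Fin (N ^ k) → Matrix (Fin N) (Fin 1) ℝ) :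
    Matrix (Fin (N ^ k)) (Fin (N ^ k)) ℝ :=
  castM (by rw [← pow_succ']; exact congrArg (N ^ ·) (by omega))
      (by rw [← pow_succ']; exact congrArg (N ^ ·) (by omega)) (commMat N (N ^ (k - 1))) *
    ∑ i : Fin (N ^ (k - 1)),
      castM (by rw [← pow_succ]; exact congrArg (N ^ ·) (by omega))
        (by rw [← pow_succ]; exact congrArg (N ^ ·) (by omega))
        (kron (EE (N ^ (k - 1)) i) (Qblk N k hk q i))

/-- `MChain N m n = M^m_m M^{m+1}_{m+1} ⋯ M^{m+n}_{m+n}`. -/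
def MChain (N m : ℕ) : (n : ℕ) → Matrix (Fin (N ^ m)) (Fin (N ^ (m + n + 1))) ℝ
  | 0 => Marg N m m le_rfl
  | n + 1 => MChain N m n * Marg N (m + n + 1) (m + n + 1) le_rfl

/-- `BChain N Q m n = B^{m+n}_{m+n}(𝒬^{(m+n)}) ⋯ B^m_m(𝒬^{(m)})`. -/
def BChain (N : ℕ) (Q : (j : ℕ) → Fin (N ^ j) → Matrix (Fin N) (Fin 1) ℝ) (m : ℕ) :
    (n : ℕ) → Matrix (Fin (N ^ (m + n + 1))) (Fin (N ^ m)) ℝ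
  | 0 => Branch N m m le_rfl (Q m)
  | n + 1 => Branch N (m + n + 1) (m + n + 1) le_rfl (Q (m + n + 1)) * BChain N Q m n

/-- The k‑shift matrix `S(𝒬^(m), …, 𝒬^(k))` with `k = m + n`:
`M^m_m ⋯ M^k_k C^{k+1}_1 B^k_k(𝒬^(k)) ⋯ B^m_m(𝒬^(m))`. -/
def Shift (N m n : ℕ) (Q : (j : ℕ) → Fin (N ^ j) → Matrix (Fin N) (Fin 1) ℝ) :
    Matrix (Fin (N ^ m)) (Fin (N ^ m)) ℝ :=
  MChain N m n * Cyc N (m + n + 1) 1 (by omega) * BChain N Q m n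

/-- ℓ¹ norm of a column vector. -/
def l1 {n : ℕ} (v : Matrix (Fin n) (Fin 1) ℝ) : ℝ := ∑ i, |v i 0|

/-!
Read an index of `ℝ^(a * b)` as a pair of indices, so that `e_(i, j) = e_i ⊗ e_j`. On basis vectors
the cycling matrix swaps the two halves of an index, marginalization deletes a digit, and branching
inserts a digit `x` with weight `q x`. Hence deleting the last digit after a cyclic shift is the
same as deleting the corresponding inner digit before it, `M^k_k C^{k+1}_m = C^k_m M^k_{k-m}`; and
appending a digit, then deleting the previous last one, only changes the last digit, so
`M^k_{k-1} B^k_k(𝒬)` is the block diagonal matrix `∑_i E_{N^{k-1},i} ⊗ Q_i`.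
-/

section TensorIdx

variable {a b c n : ℕ}

lemma pairIdx_eq_finProdFinEquiv (i : Fin a) (j : Fin b) :
    pairIdx i j = finProdFinEquiv (i, j) :=
  Fin.ext (add_comm _ _)

lemma pairIdx_divNat (i : Fin a) (j : Fin b) : (pairIdx i j).divNat = i := by
  rw [pairIdx_eq_finProdFinEquiv]
  exact congrArg Prod.fst (finProdFinEquiv.symm_apply_apply (i, j))

lemma pairIdx_modNat (i : Fin a) (j : Fin b) : (pairIdx i j).modNat = j := by
  rw [pairIdx_eq_finProdFinEquiv]
  exact congrArg Prod.snd (finProdFinEquiv.symm_apply_apply (i, j))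

/-- The position in `ℝ^n = ℝ^a ⊗ ℝ^b` of the basis vector `e_i ⊗ e_j`, for `n = a * b`. The
equation is an argument so that the same index can be split at different places without casts. -/
def tensorIdx (h : a * b = n) (i : Fin a) (j : Fin b) : Fin n :=
  Fin.cast h (pairIdx i j)

lemma tensorIdx_inj (h : a * b = n) {i i' : Fin a} {j j' : Fin b} :
    tensorIdx h i j = tensorIdx h i' j' ↔ i = i' ∧ j = j' := by
  simp [tensorIdx, pairIdx_eq_finProdFinEquiv]

lemma exists_tensorIdx_eq (h : a * b = n) (x : Fin n) : ∃ i j, tensorIdx h i j = x := by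
  subst h
  refine ⟨x.divNat, x.modNat, ?_⟩
  rw [tensorIdx, pairIdx_eq_finProdFinEquiv]
  exact finProdFinEquiv.apply_symm_apply x

lemma tensorIdx_assoc {ab bc : ℕ} (hab : a * b = ab) (hbc : b * c = bc) (hl : ab * c = n)
    (hr : a * bc = n) (i : Fin a) (j : Fin b) (l : Fin c) :
    tensorIdx hl (tensorIdx hab i j) l = tensorIdx hr i (tensorIdx hbc j l) := by
  subst hbc
  ext
  simp only [tensorIdx, pairIdx, Fin.val_cast]
  ring

lemma tensorIdx_zero_right (h : a * 1 = n) (i : Fin a) :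
    tensorIdx h i 0 = Fin.cast (by omega) i := by
  ext
  simp [tensorIdx, pairIdx]

lemma tensorIdx_zero_left (h : 1 * b = n) (j : Fin b) :
    tensorIdx h 0 j = Fin.cast (by omega) j := by
  ext
  simp [tensorIdx, pairIdx]

end TensorIdx

section Kron

variable {a b c d m n : ℕ}

lemma castM_kron_tensorIdx (hm : a * c = m) (hn : b * d = n) (A : Matrix (Fin a) (Fin b) ℝ)
    (B : Matrix (Fin c) (Fin d) ℝ) (r : Fin a) (s : Fin c) (i : Fin b) (j : Fin d) :
    castM hm hn (kron A B) (tensorIdx hm r s) (tensorIdx hn i j) = A r i * B s j := by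
  subst hm hn
  simp [castM, kron, tensorIdx, pairIdx_divNat, pairIdx_modNat]

lemma kron_tensorIdx (A : Matrix (Fin a) (Fin b) ℝ)
    (B : Matrix (Fin c) (Fin d) ℝ) (r : Fin a) (s : Fin c) (i : Fin b) (j : Fin d) :
    kron A B (tensorIdx rfl r s) (tensorIdx rfl i j) = A r i * B s j :=
  castM_kron_tensorIdx rfl rfl A B r s i j

lemma EE_apply (i r c : Fin n) : EE n i r c = if c = i then if r = c then 1 else 0 else 0 := by
  simp only [EE, Matrix.of_apply, ← ite_and]
  congr 1
  aesop

lemma castM_sum {ι : Type*} (s : Finset ι) (hm : a = m) (hn : b = n)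
    (A : ι → Matrix (Fin a) (Fin b) ℝ) :
    castM hm hn (∑ i ∈ s, A i) = ∑ i ∈ s, castM hm hn (A i) := by
  subst hm hn
  rfl

lemma castM_commMat_mulVec_single {p : ℕ} (h : n * m = p) (h' : m * n = p)
    (i : Fin m) (j : Fin n) :
    castM h h (commMat n m) *ᵥ Pi.single (tensorIdx h' i j) 1 = Pi.single (tensorIdx h j i) 1 := by
  subst h
  change commMat n m *ᵥ _ = _
  ext r
  obtain ⟨s, t, rfl⟩ := exists_tensorIdx_eq rfl r
  have row_split : tensorIdx rfl s t = tensorIdx (by ring) (tensorIdx rfl (0 : Fin 1) s) t := by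
    rw [tensorIdx_zero_left]; rfl
  have col_split : tensorIdx h' i j = tensorIdx (by ring) (tensorIdx rfl i j) (0 : Fin 1) := by
    rw [tensorIdx_zero_right]; rfl
  simp only [Matrix.mulVec_single_one, Matrix.col_apply, Pi.single_apply, tensorIdx_inj]
  rw [row_split, col_split]
  simp only [commMat, Matrix.sum_apply, castM_kron_tensorIdx, kron_tensorIdx]
  simp [eRow, eCol, Matrix.one_apply, ite_and, eq_comm (a := i)]

end Kron

section Matrices

variable {N k m n p : ℕ}

-- The dimensions `n` and `p` are free so that `N ^ 1` and `N ^ (k - (k - m))` can be read as `N`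
-- and `N ^ m`.
lemma cyc_mulVec_single (hm : m ≤ k) (hn : N ^ m = n) (hp : N ^ (k - m) = p)
    (h : p * n = N ^ k) (h' : n * p = N ^ k) (i : Fin p) (j : Fin n) :
    Cyc N k m hm *ᵥ Pi.single (tensorIdx h i j) 1 = Pi.single (tensorIdx h' j i) 1 := by
  subst hn hp
  exact castM_commMat_mulVec_single h' h i j

lemma marg_mulVec_single (hm : m ≤ k) (hn : N ^ m = n) (hp : N ^ (k - m) = p)
    (h : n * N * p = N ^ (k + 1)) (h' : n * p = N ^ k) (i : Fin n) (x : Fin N) (j : Fin p) :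
    Marg N k m hm *ᵥ Pi.single (tensorIdx h (tensorIdx rfl i x) j) 1 =
      Pi.single (tensorIdx h' i j) 1 := by
  subst hn hp
  ext r
  obtain ⟨s, t, rfl⟩ := exists_tensorIdx_eq h' r
  have row_split :
      tensorIdx h' s t = tensorIdx (by rwa [mul_one]) (tensorIdx rfl s (0 : Fin 1)) t := by
    rw [tensorIdx_zero_right]; rfl
  simp only [Matrix.mulVec_single_one, Matrix.col_apply, Pi.single_apply, tensorIdx_inj]
  rw [row_split, Marg, castM_kron_tensorIdx, kron_tensorIdx]
  simp [onesRow, Matrix.one_apply, ← ite_and, and_comm]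

lemma marg_self_mulVec_single (h : N ^ k * N = N ^ (k + 1)) (i : Fin (N ^ k)) (x : Fin N) :
    Marg N k k le_rfl *ᵥ Pi.single (tensorIdx h i x) 1 = Pi.single i 1 := by
  have last_marg := marg_mulVec_single le_rfl rfl (by simp) (by rwa [mul_one]) (mul_one _) i x 0
  rwa [tensorIdx_zero_right, tensorIdx_zero_right] at last_marg

lemma branch_mulVec_single (hm : m ≤ k) (q : Fin (N ^ k) → Matrix (Fin N) (Fin 1) ℝ)
    (hp : N ^ (k - m) = p) (h : N ^ m * N * p = N ^ (k + 1)) (h' : N ^ m * p = N ^ k)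
    (i : Fin (N ^ m)) (j : Fin p) :
    Branch N k m hm q *ᵥ Pi.single (tensorIdx h' i j) 1 =
      ∑ x, q (tensorIdx h' i j) x 0 • Pi.single (tensorIdx h (tensorIdx rfl i x) j) 1 := by
  subst hp
  ext r
  obtain ⟨st, u, rfl⟩ := exists_tensorIdx_eq h r
  obtain ⟨s, t, rfl⟩ := exists_tensorIdx_eq rfl st
  have col_split :
      tensorIdx h' i j = tensorIdx (by rwa [mul_one]) (tensorIdx rfl i (0 : Fin 1)) j := by
    rw [tensorIdx_zero_right]; rfl
  have entry : Branch N k m hm q (tensorIdx h (tensorIdx rfl s t) u) (tensorIdx h' i j) =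
      ∑ i', ∑ j', EE (N ^ m) i' s i * q (tensorIdx h' i' j') t 0 * EE (N ^ (k - m)) j' u j := by
    rw [col_split]
    simp only [Branch, castM_sum, Matrix.sum_apply, castM_kron_tensorIdx, kron_tensorIdx]
    rfl
  rw [Matrix.mulVec_single_one, Matrix.col_apply, entry]
  by_cases hs : s = i <;> simp [hs, EE_apply, ite_and, Pi.single_apply, tensorIdx_inj]

lemma branch_self_mulVec_single (q : Fin (N ^ k) → Matrix (Fin N) (Fin 1) ℝ)
    (h : N ^ k * N = N ^ (k + 1)) (i : Fin (N ^ k)) :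
    Branch N k k le_rfl q *ᵥ Pi.single i 1 =
      ∑ x, q i x 0 • Pi.single (tensorIdx h i x) 1 := by
  have last_branch :=
    branch_mulVec_single le_rfl q (by simp) (by rwa [mul_one]) (mul_one _) i 0
  simpa only [tensorIdx_zero_right] using! last_branch

/-- The block diagonal matrix `∑_i E_{N^{k-1},i} ⊗ Q_i` of a tuple `𝒬`, the right factor in the
definition of the transition matrix `Q^(k)`. -/
def blockDiagMat (N k : ℕ) (hk : 1 ≤ k) (q : Fin (N ^ k) → Matrix (Fin N) (Fin 1) ℝ) :
    Matrix (Fin (N ^ k)) (Fin (N ^ k)) ℝ :=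
  ∑ i : Fin (N ^ (k - 1)),
    castM (pow_sub_one_mul (by omega) N) (pow_sub_one_mul (by omega) N)
      (kron (EE (N ^ (k - 1)) i) (Qblk N k hk q i))

lemma blockDiagMat_mulVec_single (hk : 1 ≤ k) (q : Fin (N ^ k) → Matrix (Fin N) (Fin 1) ℝ)
    (h : N ^ (k - 1) * N = N ^ k) (i : Fin (N ^ (k - 1))) (j : Fin N) :
    blockDiagMat N k hk q *ᵥ Pi.single (tensorIdx h i j) 1 =
      ∑ x, q (tensorIdx h i j) x 0 • Pi.single (tensorIdx h i x) 1 := by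
  ext r
  obtain ⟨s, t, rfl⟩ := exists_tensorIdx_eq h r
  have entry : blockDiagMat N k hk q (tensorIdx h s t) (tensorIdx h i j) =
      ∑ i', EE (N ^ (k - 1)) i' s i * q (tensorIdx h i' j) t 0 := by
    simp only [blockDiagMat, Matrix.sum_apply, castM_kron_tensorIdx]
    rfl
  rw [Matrix.mulVec_single_one, Matrix.col_apply, entry]
  simp [EE_apply, ite_and, Pi.single_apply, tensorIdx_inj]

lemma transMat_eq_cyc_mul_blockDiagMat (hk : 1 ≤ k)
    (q : Fin (N ^ k) → Matrix (Fin N) (Fin 1) ℝ) :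
    TransMat N k hk q = Cyc N k 1 hk * blockDiagMat N k hk q := by
  have hNk : N ^ (k - 1) * N = N ^ k := pow_sub_one_mul (by omega) N
  refine congrArg (· * blockDiagMat N k hk q) (Matrix.ext_of_mulVec_single fun c => ?_)
  obtain ⟨i, j, rfl⟩ := exists_tensorIdx_eq hNk c
  have hNk' : N * N ^ (k - 1) = N ^ k := by rw [mul_comm, hNk]
  rw [castM_commMat_mulVec_single hNk' hNk,
    cyc_mulVec_single hk (pow_one N) rfl hNk hNk']

theorem marg_mul_cyc (hm : m ≤ k) :
    Marg N k k le_rfl * Cyc N (k + 1) m (by omega) =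
      Cyc N k m hm * Marg N k (k - m) (Nat.sub_le k m) := by
  have hsucc : N ^ (k - m) * N = N ^ (k + 1 - m) := by rw [← pow_succ]; congr 1; omega
  have hmk : N ^ m * N ^ (k - m) = N ^ k := pow_mul_pow_sub N hm
  have hkm : N ^ (k - m) * N ^ m = N ^ k := pow_sub_mul_pow N hm
  have hmid : N ^ (k - m) * N * N ^ m = N ^ (k + 1) := by rw [mul_right_comm, hkm, pow_succ]
  refine Matrix.ext_of_mulVec_single fun c => ?_
  obtain ⟨ix, j, rfl⟩ := exists_tensorIdx_eq hmid c
  obtain ⟨i, x, rfl⟩ := exists_tensorIdx_eq rfl ix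
  simp only [← Matrix.mulVec_mulVec]
  calc Marg N k k le_rfl *ᵥ Cyc N (k + 1) m (by omega) *ᵥ
        Pi.single (tensorIdx hmid (tensorIdx rfl i x) j) 1
      = Marg N k k le_rfl *ᵥ
          Pi.single (tensorIdx (by rw [mul_comm, hmid]) j (tensorIdx rfl i x)) 1 := by
        rw [cyc_mulVec_single _ rfl hsucc.symm]
    _ = Marg N k k le_rfl *ᵥ
          Pi.single (tensorIdx (pow_succ N k).symm (tensorIdx hmk j i) x) 1 := by
        rw [tensorIdx_assoc]
    _ = Pi.single (tensorIdx hmk j i) 1 := marg_self_mulVec_single _ _ _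
    _ = Cyc N k m hm *ᵥ Pi.single (tensorIdx hkm i j) 1 := by
        rw [cyc_mulVec_single hm rfl rfl]
    _ = Cyc N k m hm *ᵥ Marg N k (k - m) (Nat.sub_le k m) *ᵥ
          Pi.single (tensorIdx hmid (tensorIdx rfl i x) j) 1 := by
        rw [marg_mulVec_single _ rfl (by rw [Nat.sub_sub_self hm])]

theorem marg_mul_branch (hk : 1 ≤ k) (q : Fin (N ^ k) → Matrix (Fin N) (Fin 1) ℝ) :
    Marg N k (k - 1) (Nat.sub_le k 1) * Branch N k k le_rfl q = blockDiagMat N k hk q := by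
  have hNk : N ^ (k - 1) * N = N ^ k := pow_sub_one_mul (by omega) N
  refine Matrix.ext_of_mulVec_single fun c => ?_
  obtain ⟨i, j, rfl⟩ := exists_tensorIdx_eq hNk c
  have marg_last_but_one (x : Fin N) : Marg N k (k - 1) (Nat.sub_le k 1) *ᵥ
      Pi.single (tensorIdx (pow_succ N k).symm (tensorIdx hNk i j) x) 1 =
        Pi.single (tensorIdx hNk i x) 1 :=
    marg_mulVec_single _ rfl (by rw [Nat.sub_sub_self hk, pow_one]) (by rw [hNk, pow_succ]) hNk
      i j x
  simp only [← Matrix.mulVec_mulVec, branch_self_mulVec_single q (pow_succ N k).symm,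
    Matrix.mulVec_sum, Matrix.mulVec_smul, marg_last_but_one, blockDiagMat_mulVec_single hk q hNk]

end Matrices

theorem stmt0_general (N k : ℕ) (hk : 1 ≤ k) (q : Fin (N ^ k) → Matrix (Fin N) (Fin 1) ℝ) :
    TransMat N k hk q =
      Marg N k k le_rfl * Cyc N (k + 1) 1 (by omega) * Branch N k k le_rfl q ∧
    TransMat N k hk q =
      Cyc N k 1 hk * Marg N k (k - 1) (by omega) * Branch N k k le_rfl q := by
  rw [marg_mul_cyc hk, and_self, Matrix.mul_assoc, marg_mul_branch hk,
    transMat_eq_cyc_mul_blockDiagMat]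

/-- Proposition: transition matrix as the shift operator.
`Q^(k) = M^k_k C^{k+1}_1 B^k_k(𝒬)` and `Q^(k) = C^k_1 M^k_{k-1} B^k_k(𝒬)`. -/
theorem stmt0 (N k : ℕ) (hN : 1 ≤ N) (hk : 1 ≤ k)
    (q : Fin (N ^ k) → Matrix (Fin N) (Fin 1) ℝ) (hq : ∀ i, IsSimplex (q i)) :
    TransMat N k hk q =
      Marg N k k le_rfl * Cyc N (k + 1) 1 (by omega) * Branch N k k le_rfl q ∧
    TransMat N k hk q =
      Cyc N k 1 hk * Marg N k (k - 1) (by omega) * Branch N k k le_rfl q := by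
  exact stmt0_general N k hk q
end
end

section
/- Let N ≥ 1 and k ≥ 1, and let Q be a column-stochastic N^k × N^k real matrix. Then Q_{r,c} = 0 for every pair of indices (r,c) with ((r-1) mod N^{k-1}) + 1 ≠ ⌈c/N⌉ if and only if there exist column-stochastic N×N matrices Q_1, …, Q_{N^{k-1}} such that Q = C_{N,N^{k-1}} Σ_{i=1}^{N^{k-1}} E_{N^{k-1},i} ⊗ Q_i. (This is the block decomposition of an arbitrary k-th order Markov transition matrix.) -/
open Matrix BigOperators Filter Topology

noncomputable section

/-!
Split a row index as `r = m a + i` and a column index as `c = d j + b`. The commutation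
matrix `C` is a permutation matrix: row `m a + i` of `C A` is row `n i + a` of `A`. Hence
`C ∑ᵢ Eᵢ ⊗ Bᵢ` is the block-diagonal matrix of the `Bᵢ`, indexed by the two splittings. Its
off-block entries are those with `i ≠ j`, and each of its columns is a column of some `Bᵢ` padded
with zeros, so it is column-stochastic exactly when all `Bᵢ` are.
-/

section BlockDiagonal

variable {α : Type*} [Zero α] {ι κ o R C : Type*} [DecidableEq o]

lemma blockDiagonal_blockDiag_eq_iff {M : Matrix (ι × o) (κ × o) α} :
    blockDiagonal (blockDiag M) = M ↔ ∀ p q, p.2 ≠ q.2 → M p q = 0 := by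
  constructor
  · intro h p q hpq
    rw [← h, blockDiagonal_apply, if_neg hpq]
  · intro h
    ext ⟨a, i⟩ ⟨b, j⟩
    by_cases hij : i = j
    · rw [hij, blockDiagonal_apply_eq, blockDiag_apply]
    · rw [blockDiagonal_apply_ne _ _ _ hij, h _ _ hij]

lemma exists_eq_reindex_blockDiagonal_iff (e : ι × o ≃ R) (f : κ × o ≃ C) {M : Matrix R C α} :
    (∃ B, M = reindex e f (blockDiagonal B)) ↔
      ∀ r c, (e.symm r).2 ≠ (f.symm c).2 → M r c = 0 := by
  constructor
  · rintro ⟨B, rfl⟩ r c hrc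
    rw [reindex_apply, submatrix_apply, blockDiagonal_apply, if_neg hrc]
  · intro h
    have hblock : blockDiagonal (blockDiag (M.submatrix e f)) = M.submatrix e f :=
      blockDiagonal_blockDiag_eq_iff.2 fun p q hpq => h _ _ (by simpa using hpq)
    exact ⟨blockDiag (M.submatrix e f), by simp [hblock]⟩

end BlockDiagonal

section FinIndexing

variable {n d m K L : ℕ}

lemma isColStochastic_reindex_blockDiagonal_iff (e : Fin n × Fin m ≃ Fin K)
    (f : Fin d × Fin m ≃ Fin L) {B : Fin m → Matrix (Fin n) (Fin d) ℝ} :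
    IsColStochastic (reindex e f (blockDiagonal B)) ↔ ∀ i, IsColStochastic (B i) := by
  have nonneg_iff (b : Fin d) (j : Fin m) :
      (∀ a i, 0 ≤ blockDiagonal B (a, i) (b, j)) ↔ ∀ a, 0 ≤ B j a b := by
    refine forall_congr' fun a => ⟨fun h => by simpa using h j, fun h i => ?_⟩
    rw [blockDiagonal_apply']
    split_ifs with hij
    · exact hij ▸ h
    · exact le_rfl
  have sum_eq (b : Fin d) (j : Fin m) :
      ∑ p, blockDiagonal B p (b, j) = ∑ a, B j a b := by
    simp [Fintype.sum_prod_type, blockDiagonal_apply']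
  calc IsColStochastic (reindex e f (blockDiagonal B))
    _ ↔ ∀ q, (∀ p, 0 ≤ blockDiagonal B p q) ∧ ∑ p, blockDiagonal B p q = 1 := by
      simp only [IsColStochastic, f.surjective.forall, e.surjective.forall, ← e.sum_comp,
        reindex_apply, submatrix_apply, Equiv.symm_apply_apply]
    _ ↔ ∀ b j, (∀ a, 0 ≤ B j a b) ∧ ∑ a, B j a b = 1 := by
      simp only [Prod.forall, nonneg_iff, sum_eq]
    _ ↔ ∀ i, IsColStochastic (B i) := forall_comm

/-- The row-major indexing `(a, i) ↦ m a + i`, in which the block index `i` is the low-order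
digit. The equation `h` lets the target be any `Fin K` with `K = n m`, such as `Fin (N ^ k)`. -/
def blockMinorEquiv (h : n * m = K) : Fin n × Fin m ≃ Fin K :=
  finProdFinEquiv.trans (finCongr h)

/-- The indexing `(a, i) ↦ n i + a`, in which the block index `i` is the high-order digit. The
pair keeps the block index second, as `Matrix.blockDiagonal` does. -/
def blockMajorEquiv (h : m * n = K) : Fin n × Fin m ≃ Fin K :=
  (Equiv.prodComm _ _).trans (blockMinorEquiv h)

lemma blockMinorEquiv_symm_apply (h : n * m = K) (r : Fin K) :
    (blockMinorEquiv h).symm r = ((r.cast h.symm).divNat, (r.cast h.symm).modNat) :=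
  rfl

lemma blockMajorEquiv_symm_apply (h : m * n = K) (c : Fin K) :
    (blockMajorEquiv h).symm c = ((c.cast h.symm).modNat, (c.cast h.symm).divNat) :=
  rfl

lemma blockMinorEquiv_symm_ne_blockMajorEquiv_symm_iff (hnm : n * m = K) (hmd : m * d = L)
    (r : Fin K) (c : Fin L) :
    ((blockMinorEquiv hnm).symm r).2 ≠ ((blockMajorEquiv hmd).symm c).2 ↔
      r.val % m + 1 ≠ (c.val + d) / d := by
  have hd : 0 < d := Nat.pos_of_mul_pos_left (hmd ▸ c.pos)
  simp [blockMinorEquiv_symm_apply, blockMajorEquiv_symm_apply, Fin.ext_iff,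
    Nat.add_div_right _ hd]

lemma commMat_apply (r c : Fin (n * m)) :
    commMat n m r c = if c.val / n = r.val % m ∧ c.val % n = r.val / m then 1 else 0 := by
  have hdiv : r.val / m < n := Nat.div_lt_of_lt_mul (mul_comm n m ▸ r.isLt)
  have summand_apply (i : Fin m) :
      castM (by ring) (by ring)
          (kron (kron (eRow m i) (1 : Matrix (Fin n) (Fin n) ℝ)) (eCol m i)) r c =
        if i = r.modNat then if c.val / n = r.val % m ∧ c.val % n = r.val / m then 1 else 0
        else 0 := by
    simp only [castM, kron, eRow, eCol, one_apply, reindex_apply, submatrix_apply, of_apply,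
      finCongr_symm, finCongr_apply, Fin.ext_iff, Fin.val_cast, Fin.coe_divNat, Fin.coe_modNat,
      Nat.div_one, Nat.mod_eq_of_lt hdiv]
    grind
  rw [commMat, Matrix.sum_apply, Fintype.sum_congr _ _ summand_apply, Finset.sum_ite_eq',
    if_pos (Finset.mem_univ _)]

lemma castM_commMat_eq_toMatrix (hnm : n * m = K) (hmn : m * n = K) :
    castM hnm hnm (commMat n m) =
      ((blockMinorEquiv hnm).symm.trans (blockMajorEquiv hmn)).toPEquiv.toMatrix := by
  ext r c
  have hc : c = blockMajorEquiv hmn ((blockMinorEquiv hnm).symm r) ↔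
      c.val / n = r.val % m ∧ c.val % n = r.val / m := by
    rw [← Equiv.symm_apply_eq, blockMajorEquiv_symm_apply, blockMinorEquiv_symm_apply]
    simp [Fin.ext_iff, and_comm]
  simp [castM, commMat_apply, PEquiv.toMatrix_apply, hc, eq_comm]

lemma castM_commMat_mul_reindex {R C : Type*} (hnm : n * m = K) (hmn : m * n = K) (f : R ≃ C)
    (A : Matrix (Fin n × Fin m) R ℝ) :
    castM hnm hnm (commMat n m) * reindex (blockMajorEquiv hmn) f A =
      reindex (blockMinorEquiv hnm) f A := by
  rw [castM_commMat_eq_toMatrix hnm hmn, PEquiv.toMatrix_toPEquiv_mul]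
  ext r c
  simp

lemma sum_castM_kron_EE (hmn : m * n = K) (hmd : m * d = L)
    (B : Fin m → Matrix (Fin n) (Fin d) ℝ) :
    ∑ i, castM hmn hmd (kron (EE m i) (B i)) =
      reindex (blockMajorEquiv hmn) (blockMajorEquiv hmd) (blockDiagonal B) := by
  ext r c
  simp [Matrix.sum_apply, castM, kron, EE, blockDiagonal_apply, blockMajorEquiv_symm_apply,
    ite_and, eq_comm]

theorem stmt3_general (hnm : n * m = K) (hmn : m * n = K) (hmd : m * d = L)
    (Q : Matrix (Fin K) (Fin L) ℝ) :
    (IsColStochastic Q ∧ ∀ r c, r.val % m + 1 ≠ (c.val + d) / d → Q r c = 0) ↔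
      ∃ B : Fin m → Matrix (Fin n) (Fin d) ℝ, (∀ i, IsColStochastic (B i)) ∧
        Q = castM hnm hnm (commMat n m) * ∑ i, castM hmn hmd (kron (EE m i) (B i)) := by
  simp only [sum_castM_kron_EE, castM_commMat_mul_reindex,
    ← blockMinorEquiv_symm_ne_blockMajorEquiv_symm_iff hnm hmd,
    ← exists_eq_reindex_blockDiagonal_iff]
  constructor
  · rintro ⟨hQ, B, rfl⟩
    exact ⟨B, (isColStochastic_reindex_blockDiagonal_iff _ _).1 hQ, rfl⟩
  · rintro ⟨B, hB, rfl⟩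
    exact ⟨(isColStochastic_reindex_blockDiagonal_iff _ _).2 hB, B, rfl⟩

end FinIndexing

/-- a column-stochastic `N^k × N^k` matrix `Q` has
`Q_{r,c} = 0` whenever `((r-1) mod N^{k-1}) + 1 ≠ ⌈c/N⌉` (1-based indices; here
expressed 0-based, with `⌈(c+1)/N⌉ = (c + N)/N`) iff it decomposes as
`Q = C_{N,N^{k-1}} ∑_i E_{N^{k-1},i} ⊗ Q_i` with column-stochastic `Q_i`. -/
theorem stmt3 (N k : ℕ) (hN : 1 ≤ N) (hk : 1 ≤ k)
    (Q : Matrix (Fin (N ^ k)) (Fin (N ^ k)) ℝ) (hQ : IsColStochastic Q) :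
    (∀ r c : Fin (N ^ k), r.val % N ^ (k - 1) + 1 ≠ (c.val + N) / N → Q r c = 0) ↔
    ∃ Qi : Fin (N ^ (k - 1)) → Matrix (Fin N) (Fin N) ℝ,
      (∀ i, IsColStochastic (Qi i)) ∧
      Q = castM (by rw [← pow_succ']; exact congrArg (N ^ ·) (by omega))
            (by rw [← pow_succ']; exact congrArg (N ^ ·) (by omega))
            (commMat N (N ^ (k - 1))) *
          ∑ i : Fin (N ^ (k - 1)),
            castM (by rw [← pow_succ]; exact congrArg (N ^ ·) (by omega))
              (by rw [← pow_succ]; exact congrArg (N ^ ·) (by omega))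
              (kron (EE (N ^ (k - 1)) i) (Qi i)) :=
  (and_iff_right hQ).symm.trans (stmt3_general _ _ _ Q)
end
end

section
/- Let N ≥ 1 and k ≥ 1. For all integers m, n with 0 ≤ n ≤ m ≤ k, one has M^k_m = C^k_{m-n} M^k_n C^{k+1}_{(k+1)-(m-n)}, where for m = n the right cycling factor C^{k+1}_{k+1} = C_{N^{k+1},1} is the identity. -/
open Matrix BigOperators Filter Topology

noncomputable section

/-!
The commutation matrix is the permutation matrix of the flip `ℝ^m ⊗ ℝ^n → ℝ^n ⊗ ℝ^m`, so multiplying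
`A ⊗ B` by commutation matrices on both sides gives `B ⊗ A`. With `p = m - n` and
`A = E_{N^n} ⊗ 1_Nᵀ ⊗ E_{N^{k-m}}`, associativity of `⊗` and `E_a ⊗ E_b = E_{ab}` give
`M^k_m = E_{N^p} ⊗ A` and `M^k_n = A ⊗ E_{N^p}`, and the two cycling factors are the commutation
matrices that exchange `A` and `E_{N^p}`.
-/

section Cast

variable {a b c a' b' c' a'' b'' : ℕ}

theorem castM_castM (ha : a = a') (hb : b = b') (ha' : a' = a'') (hb' : b' = b'')
    (A : Matrix (Fin a) (Fin b) ℝ) :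
    castM ha' hb' (castM ha hb A) = castM (ha.trans ha') (hb.trans hb') A :=
  rfl

theorem castM_mul_castM (ha : a = a') (hb : b = b') (hc : c = c')
    (A : Matrix (Fin a) (Fin b) ℝ) (B : Matrix (Fin b) (Fin c) ℝ) :
    castM ha hb A * castM hb hc B = castM ha hc (A * B) := by
  subst ha hb hc
  rfl

end Cast

section Kronecker

variable {a b c d e f a' b' : ℕ}

open scoped Kronecker in
theorem kron_eq_submatrix (A : Matrix (Fin a) (Fin b) ℝ) (B : Matrix (Fin c) (Fin d) ℝ) :
    kron A B = (A ⊗ₖ B).submatrix finProdFinEquiv.symm finProdFinEquiv.symm :=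
  rfl

theorem kron_castM_left (ha : a = a') (hb : b = b') (A : Matrix (Fin a) (Fin b) ℝ)
    (B : Matrix (Fin c) (Fin d) ℝ) :
    kron (castM ha hb A) B = castM (congrArg (· * c) ha) (congrArg (· * d) hb) (kron A B) := by
  subst ha hb
  rfl

theorem kron_one_one (a b : ℕ) :
    kron (1 : Matrix (Fin a) (Fin a) ℝ) (1 : Matrix (Fin b) (Fin b) ℝ) = 1 := by
  rw [kron_eq_submatrix, one_kronecker_one, submatrix_one_equiv]

theorem divNat_cast_mul_assoc (i : Fin (a * b * c)) :
    (i.cast (mul_assoc a b c)).divNat = i.divNat.divNat := by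
  ext
  simp [Nat.div_div_eq_div_mul, mul_comm]

theorem divNat_modNat_cast_mul_assoc (i : Fin (a * b * c)) :
    (i.cast (mul_assoc a b c)).modNat.divNat = i.divNat.modNat := by
  ext
  simp [Nat.mod_mul_left_div_self]

theorem modNat_modNat_cast_mul_assoc (i : Fin (a * b * c)) :
    (i.cast (mul_assoc a b c)).modNat.modNat = i.modNat := by
  ext
  simp

theorem kron_assoc (A : Matrix (Fin a) (Fin b) ℝ) (B : Matrix (Fin c) (Fin d) ℝ)
    (C : Matrix (Fin e) (Fin f) ℝ) :
    kron (kron A B) C =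
      castM (mul_assoc a c e).symm (mul_assoc b d f).symm (kron A (kron B C)) := by
  ext i j
  simp only [kron, castM, reindex_apply, submatrix_apply, of_apply, finCongr_symm, finCongr_apply,
    divNat_cast_mul_assoc, divNat_modNat_cast_mul_assoc, modNat_modNat_cast_mul_assoc, mul_assoc]

end Kronecker

section Commutation

variable {a b c d : ℕ}

/-- The flip `(i, j) ↦ (j, i)` of pairs of indices, read off the row-major numbering of
`Fin n × Fin m` by `Fin (n * m)`. -/
def finMulFlip (n m : ℕ) : Fin (n * m) ≃ Fin (m * n) :=
  finProdFinEquiv.symm.trans ((Equiv.prodComm _ _).trans finProdFinEquiv)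

theorem finMulFlip_symm (n m : ℕ) : (finMulFlip n m).symm = finMulFlip m n :=
  rfl

theorem finMulFlip_eq_iff {n m : ℕ} (r : Fin (n * m)) (s : Fin (m * n)) :
    finMulFlip n m r = s ↔ r.divNat = s.modNat ∧ r.modNat = s.divNat := by
  rw [and_comm, ← Prod.mk_inj]
  exact (Equiv.eq_symm_apply finProdFinEquiv).symm

-- `C_{n,m}` maps `ℝ^m ⊗ ℝ^n` to `ℝ^n ⊗ ℝ^m`: the cast lets its columns be read as pairs in
-- `Fin m × Fin n` rather than `Fin n × Fin m`.
theorem castM_commMat_apply {n m : ℕ} (r : Fin (n * m)) (s : Fin (m * n)) :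
    castM rfl (mul_comm n m) (commMat n m) r s =
      if r.divNat = s.modNat ∧ r.modNat = s.divNat then 1 else 0 := by
  have hr : r.val / m % n = r.val / m := Nat.mod_eq_of_lt r.divNat.isLt
  calc castM rfl (mul_comm n m) (commMat n m) r s
    _ = ∑ i : Fin m, ((if s.divNat = i then (1 : ℝ) else 0) *
          (if r.divNat = s.modNat then 1 else 0)) * (if r.modNat = i then 1 else 0) := by
      simp only [castM, commMat, kron, eRow, eCol, reindex_apply, submatrix_apply, Matrix.sum_apply,
        of_apply, one_apply, Fin.ext_iff, finCongr_symm, finCongr_apply, Fin.coe_divNat,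
        Fin.coe_modNat, Fin.val_cast, Nat.div_one, hr]
      congr!
    _ = if r.divNat = s.modNat ∧ r.modNat = s.divNat then 1 else 0 := by
      simp [ite_and, eq_comm (a := r.modNat)]

theorem castM_commMat_eq_toMatrix_s4 (n m : ℕ) :
    castM rfl (mul_comm n m) (commMat n m) = (finMulFlip n m).toPEquiv.toMatrix := by
  ext r s
  simp only [castM_commMat_apply, PEquiv.toMatrix_apply, Equiv.toPEquiv_apply, Option.mem_some_iff,
    finMulFlip_eq_iff]

theorem kron_submatrix_finMulFlip (A : Matrix (Fin a) (Fin b) ℝ) (B : Matrix (Fin c) (Fin d) ℝ) :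
    (kron A B).submatrix (finMulFlip c a) (finMulFlip d b) = kron B A := by
  ext i j
  simp [kron_eq_submatrix, finMulFlip, mul_comm]

theorem commMat_mul_kron_mul_commMat (A : Matrix (Fin a) (Fin b) ℝ)
    (B : Matrix (Fin c) (Fin d) ℝ) :
    castM rfl (mul_comm c a) (commMat c a) * kron A B *
      castM rfl (mul_comm b d) (commMat b d) = kron B A := by
  rw [castM_commMat_eq_toMatrix_s4, castM_commMat_eq_toMatrix_s4, PEquiv.toMatrix_toPEquiv_mul,
    PEquiv.mul_toMatrix_toPEquiv, submatrix_submatrix, finMulFlip_symm]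
  exact kron_submatrix_finMulFlip A B

end Commutation

section Marginalization

/-- The marginalization `E_a ⊗ 1_sᵀ ⊗ E_b` that sums out the middle factor of `ℝ^a ⊗ ℝ^s ⊗ ℝ^b`.
The factors have arbitrary dimensions, so that `E_a` and `E_b` can be split and merged. -/
def blockMarg (a s b : ℕ) : Matrix (Fin (a * 1 * b)) (Fin (a * s * b)) ℝ :=
  kron (kron (1 : Matrix (Fin a) (Fin a) ℝ) (onesRow s)) (1 : Matrix (Fin b) (Fin b) ℝ)

theorem blockMarg_mul_left (d a s b : ℕ) :
    blockMarg (d * a) s b = castM (by ring) (by ring)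
      (kron (1 : Matrix (Fin d) (Fin d) ℝ) (blockMarg a s b)) := by
  rw [blockMarg, ← kron_one_one, kron_assoc 1 1, kron_castM_left, kron_assoc 1, castM_castM,
    blockMarg]

theorem blockMarg_mul_right (a s b d : ℕ) :
    blockMarg a s (b * d) = castM (by ring) (by ring)
      (kron (blockMarg a s b) (1 : Matrix (Fin d) (Fin d) ℝ)) := by
  rw [blockMarg, blockMarg, kron_assoc _ 1 1, kron_one_one, castM_castM]
  rfl

variable {N k m l a b : ℕ}

theorem Marg_eq_castM_blockMarg (hl : m + l = k) (ha : a = N ^ m) (hb : b = N ^ l) :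
    Marg N k m (by omega) = castM
      (by rw [ha, hb, mul_one, ← pow_add, hl])
      (by rw [ha, hb, mul_right_comm, ← pow_add, hl, pow_succ])
      (blockMarg a N b) := by
  obtain rfl : l = k - m := by omega
  subst ha hb
  rfl

theorem Cyc_eq_castM_commMat (hl : m + l = k) (ha : a = N ^ m) (hb : b = N ^ l) :
    Cyc N k m (by omega) = castM
      (by rw [ha, hb, ← pow_add, hl])
      (by rw [ha, hb, ← pow_add, hl])
      (commMat a b) := by
  obtain rfl : l = k - m := by omega
  subst ha hb
  rfl

end Marginalization

/-- `M^k_m = C^k_{m-n} M^k_n C^{k+1}_{(k+1)-(m-n)}` for `0 ≤ n ≤ m ≤ k`. -/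
theorem stmt4 (N k : ℕ) (hN : 1 ≤ N) (hk : 1 ≤ k) (m n : ℕ) (hn : n ≤ m) (hm : m ≤ k) :
    Marg N k m hm =
      Cyc N k (m - n) (by omega) * Marg N k n (by omega) *
        Cyc N (k + 1) ((k + 1) - (m - n)) (by omega) := by
  have marg_m := Marg_eq_castM_blockMarg (N := N) (k := k) (m := m)
    (a := N ^ (m - n) * N ^ n) (l := k - m) (by omega)
    (by rw [← pow_add, Nat.sub_add_cancel hn]) rfl
  have marg_n := Marg_eq_castM_blockMarg (N := N) (k := k) (m := n)
    (b := N ^ (k - m) * N ^ (m - n)) (l := k - m + (m - n)) (by omega)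
    rfl (pow_add ..).symm
  have cyc_left := Cyc_eq_castM_commMat (N := N) (k := k) (m := m - n)
    (b := N ^ n * 1 * N ^ (k - m)) (l := n + (k - m)) (by omega) rfl
    (by rw [mul_one, pow_add])
  have cyc_right := Cyc_eq_castM_commMat (N := N) (k := k + 1) (m := k + 1 - (m - n))
    (a := N ^ n * N * N ^ (k - m)) (l := m - n) (by omega)
    (by rw [← pow_succ, ← pow_add]; congr 1; omega) rfl
  rw [marg_m, marg_n, cyc_left, cyc_right, blockMarg_mul_left, blockMarg_mul_right, castM_castM,
    castM_castM, ← commMat_mul_kron_mul_commMat, ← castM_mul_castM, ← castM_mul_castM]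
  rfl
end
end

section
/- Let N ≥ 1 and k ≥ 1. For all integers n with 0 ≤ n ≤ k and all integers m ≥ 0, one has (C^k_n)^m = C^k_r, where r := (n·m) mod k (note C^k_0 = C_{1,N^k} and C^k_k = C_{N^k,1} both equal the identity). -/
open Matrix BigOperators Filter Topology

noncomputable section

/-!
The matrix `C_{n,m}` is the permutation matrix of `q * m + s ↦ s * n + q` for `q < n`, `s < m`.
Since `n * m ≡ 1` modulo `n * m - 1`, this permutation is multiplication by `n` modulo `n * m - 1`,
and it fixes the two indices `0` and `n * m - 1` that this modulus does not separate. So `C^k_n` is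
multiplication by `N ^ n` modulo `N ^ k - 1`, its `m`-th power is multiplication by `N ^ (n * m)`,
and `N ^ k ≡ 1` lets us reduce the exponent modulo `k`.
-/

theorem permMatrix_pow {ι R : Type*} [Fintype ι] [DecidableEq ι] [Semiring R]
    (σ : Equiv.Perm ι) (m : ℕ) : (σ ^ m).permMatrix R = σ.permMatrix R ^ m := by
  induction m with
  | zero => rw [pow_zero, pow_zero, permMatrix_one]
  | succ m ih => rw [pow_succ', permMatrix_mul, ih, pow_succ]

theorem reindex_permMatrix {ι κ R : Type*} [DecidableEq ι] [DecidableEq κ] [Zero R] [One R]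
    (e : ι ≃ κ) (σ : Equiv.Perm ι) :
    reindex e e (σ.permMatrix R) = (e.permCongr σ).permMatrix R := by
  ext i j
  simp [PEquiv.toMatrix_apply, Equiv.toPEquiv_apply, Equiv.eq_symm_apply]

theorem modEq_one_mod_sub_one {K : ℕ} (hK : 0 < K) : K ≡ 1 [MOD K - 1] :=
  ((Nat.modEq_iff_dvd' hK).2 dvd_rfl).symm

theorem pow_modEq_pow_mod {N : ℕ} (hN : 0 < N) (k j : ℕ) :
    N ^ j ≡ N ^ (j % k) [MOD N ^ k - 1] := by
  calc N ^ j = (N ^ k) ^ (j / k) * N ^ (j % k) := by rw [← pow_mul, ← pow_add, Nat.div_add_mod]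
    _ ≡ 1 ^ (j / k) * N ^ (j % k) [MOD N ^ k - 1] :=
      ((modEq_one_mod_sub_one (pow_pos hN k)).pow _).mul_right _
    _ = N ^ (j % k) := by rw [one_pow, one_mul]

theorem eq_of_modEq_of_eq_zero_iff {M x y : ℕ} (hx : x ≤ M) (hy : y ≤ M) (hxy : x ≡ y [MOD M])
    (hzero : x = 0 ↔ y = 0) : x = y := by
  rcases hx.lt_or_eq with hx | rfl <;> rcases hy.lt_or_eq with hy | rfl
  · exact hxy.eq_of_lt_of_lt hx hy
  · rw [Nat.ModEq, Nat.mod_self, Nat.mod_eq_of_lt hx] at hxy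
    omega
  · rw [Nat.ModEq, Nat.mod_self, Nat.mod_eq_of_lt hy] at hxy
    omega
  · rfl

/-- The permutation `σ` of `{0, …, K - 1}` is multiplication by `t` modulo `K - 1`. The residue
does not distinguish the indices `0` and `K - 1`, so `σ` is in addition required to fix `0`;
this makes `σ` determined by the residue of `t`. -/
structure ActsAsMul {K : ℕ} (t : ℕ) (σ : Equiv.Perm (Fin K)) : Prop where
  modEq : ∀ r, (σ r : ℕ) ≡ t * r [MOD K - 1]
  eq_zero_iff : ∀ r, (σ r : ℕ) = 0 ↔ (r : ℕ) = 0

namespace ActsAsMul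

variable {K s t : ℕ} {σ τ : Equiv.Perm (Fin K)}

theorem one : ActsAsMul 1 (1 : Equiv.Perm (Fin K)) where
  modEq r := by simpa using Nat.ModEq.refl _
  eq_zero_iff _ := Iff.rfl

theorem mul (hσ : ActsAsMul s σ) (hτ : ActsAsMul t τ) : ActsAsMul (s * t) (σ * τ) where
  modEq r := calc
    (σ (τ r) : ℕ) ≡ s * τ r [MOD K - 1] := hσ.modEq (τ r)
    _ ≡ s * (t * r) [MOD K - 1] := (hτ.modEq r).mul_left s
    _ = s * t * r := (mul_assoc s t r).symm
  eq_zero_iff r := (hσ.eq_zero_iff (τ r)).trans (hτ.eq_zero_iff r)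

theorem pow (hσ : ActsAsMul t σ) (m : ℕ) : ActsAsMul (t ^ m) (σ ^ m) := by
  induction m with
  | zero => simpa using one
  | succ m ih => simpa only [pow_succ] using ih.mul hσ

theorem permCongr_finCongr {K' : ℕ} (h : K = K') (hσ : ActsAsMul t σ) :
    ActsAsMul t ((finCongr h).permCongr σ) := by
  subst h
  exact hσ

theorem eq_of_modEq (hσ : ActsAsMul s σ) (hτ : ActsAsMul t τ) (hst : s ≡ t [MOD K - 1]) :
    σ = τ := by
  ext r
  have residue_eq : (σ r : ℕ) ≡ τ r [MOD K - 1] :=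
    (hσ.modEq r).trans ((hst.mul_right r).trans (hτ.modEq r).symm)
  exact eq_of_modEq_of_eq_zero_iff (Nat.le_sub_one_of_lt (σ r).isLt)
    (Nat.le_sub_one_of_lt (τ r).isLt) residue_eq ((hσ.eq_zero_iff r).trans (hτ.eq_zero_iff r).symm)

end ActsAsMul

/-- The index permutation underlying the commutation matrix `C_{n,m}`: it swaps the two
coordinates of `Fin n × Fin m`, both products being enumerated in row-major order. -/
def commPerm (n m : ℕ) : Equiv.Perm (Fin (n * m)) :=
  finProdFinEquiv.symm.trans <|
    (Equiv.prodComm (Fin n) (Fin m)).trans <| finProdFinEquiv.trans <| finCongr (mul_comm m n)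

theorem val_commPerm (n m : ℕ) (r : Fin (n * m)) :
    (commPerm n m r : ℕ) = r / m + n * (r % m) :=
  rfl

theorem commPerm_eq_iff {n m : ℕ} (r c : Fin (n * m)) :
    commPerm n m r = c ↔ (r : ℕ) / m = c % n ∧ (r : ℕ) % m = c / n := by
  have hdiv : (r : ℕ) / m < n := Nat.div_lt_of_lt_mul (r.isLt.trans_eq (mul_comm n m))
  have hn : 0 < n := Nat.zero_lt_of_lt hdiv
  rw [Fin.ext_iff, val_commPerm, and_comm, eq_comm (b := (c : ℕ) / n), eq_comm (b := (c : ℕ) % n),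
    Nat.div_mod_unique hn]
  exact (and_iff_left hdiv).symm

theorem actsAsMul_commPerm (n m : ℕ) : ActsAsMul n (commPerm n m) where
  modEq r := by
    have hnm : 0 < n * m := r.pos
    calc (commPerm n m r : ℕ) = 1 * (r / m) + n * (r % m) := by rw [val_commPerm, one_mul]
      _ ≡ n * m * (r / m) + n * (r % m) [MOD n * m - 1] :=
        ((modEq_one_mod_sub_one hnm).symm.mul_right _).add_right _
      _ = n * r := by rw [mul_assoc, ← mul_add, Nat.div_add_mod]
  eq_zero_iff r := by
    have hn : n ≠ 0 := (Nat.pos_of_mul_pos_right r.pos).ne'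
    rw [val_commPerm]
    constructor
    · intro h
      obtain ⟨hdiv, hmod⟩ : (r : ℕ) / m = 0 ∧ (r : ℕ) % m = 0 := by simpa [hn] using h
      rw [← Nat.div_add_mod (r : ℕ) m, hdiv, hmod, mul_zero]
    · intro h
      simp [h]

theorem commMat_summand_apply {n m : ℕ} (i : Fin m) (hrow : 1 * n * m = n * m)
    (hcol : m * n * 1 = n * m) (r c : Fin (n * m)) :
    castM hrow hcol (kron (kron (eRow m i) (1 : Matrix (Fin n) (Fin n) ℝ)) (eCol m i)) r c =
      if (r : ℕ) / m = c % n ∧ (r : ℕ) % m = i ∧ (c : ℕ) / n = i then 1 else 0 := by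
  have hdiv : (r : ℕ) / m < n := Nat.div_lt_of_lt_mul (r.isLt.trans_eq (mul_comm n m))
  simp only [castM, kron, eRow, eCol, reindex_apply, submatrix_apply, of_apply, one_apply,
    ite_zero_mul_ite_zero, mul_one]
  refine if_congr ?_ rfl rfl
  simp only [Fin.ext_iff, finCongr_symm, finCongr_apply, Fin.val_cast, Fin.coe_divNat,
    Fin.coe_modNat, Nat.mod_eq_of_lt hdiv, Nat.div_one]
  tauto

theorem commMat_eq_permMatrix (n m : ℕ) : commMat n m = (commPerm n m).permMatrix ℝ := by
  ext r c
  have hc : (c : ℕ) / n < m := Nat.div_lt_of_lt_mul c.isLt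
  rw [commMat, Matrix.sum_apply, Finset.sum_eq_single ⟨c / n, hc⟩]
  · simp [commMat_summand_apply, PEquiv.toMatrix_apply, Equiv.toPEquiv_apply, commPerm_eq_iff]
  · intro i _ hi
    have hne : (c : ℕ) / n ≠ i := fun h => hi (Fin.ext h.symm)
    simp [commMat_summand_apply, hne]
  · simp

/-- The index permutation underlying the cycling matrix `C^k_n`. In base `N` it moves the `n`
leading digits of a `k`-digit index behind the other ones. -/
def cycPerm (N k n : ℕ) (hn : n ≤ k) : Equiv.Perm (Fin (N ^ k)) :=
  (finCongr (by rw [← pow_add, Nat.add_sub_cancel' hn])).permCongr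
    (commPerm (N ^ n) (N ^ (k - n)))

theorem Cyc_eq_permMatrix (N k n : ℕ) (hn : n ≤ k) :
    Cyc N k n hn = (cycPerm N k n hn).permMatrix ℝ := by
  rw [Cyc, castM, commMat_eq_permMatrix, reindex_permMatrix, cycPerm]

theorem actsAsMul_cycPerm (N k n : ℕ) (hn : n ≤ k) : ActsAsMul (N ^ n) (cycPerm N k n hn) :=
  (actsAsMul_commPerm _ _).permCongr_finCongr _

theorem cycPerm_pow {N k n : ℕ} (hN : 0 < N) (hk : 0 < k) (hn : n ≤ k) (m : ℕ) :
    cycPerm N k n hn ^ m = cycPerm N k (n * m % k) (Nat.mod_lt _ hk).le := by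
  refine ((actsAsMul_cycPerm N k n hn).pow m).eq_of_modEq (actsAsMul_cycPerm N k _ _) ?_
  rw [← pow_mul]
  exact pow_modEq_pow_mod hN k (n * m)

/-- `(C^k_n)^m = C^k_{(n·m) mod k}`. -/
theorem stmt6 (N k : ℕ) (hN : 1 ≤ N) (hk : 1 ≤ k) (n : ℕ) (hn : n ≤ k) (m : ℕ) :
    Cyc N k n hn ^ m = Cyc N k (n * m % k) (le_of_lt (Nat.mod_lt _ hk)) := by
  rw [Cyc_eq_permMatrix, ← permMatrix_pow, cycPerm_pow hN hk, ← Cyc_eq_permMatrix]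
end
end

section
/- Let N ≥ 1 and k ≥ 1. For every θ ∈ Δ_{N^k} there exist tuples Θ^(m) = (θ^(m)_1, …, θ^(m)_{N^m}) of vectors in Δ_N, for m = 0, 1, …, k-1, such that θ = B^{k-1}_{k-1}(Θ^(k-1)) B^{k-2}_{k-2}(Θ^(k-2)) ⋯ B^0_0(Θ^(0)), where the product on the right is an N^k × 1 matrix identified with a vector in ℝ^{N^k}. -/
open Matrix BigOperators Filter Topology

noncomputable section

/-!
Read an index in `Fin (N ^ (k + 1))` as a word of `k + 1` letters, and delete the letter that
follows the first `m`. A nonnegative vector `f` on words is then the marginal `g` on the shortened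
words times the conditional distributions `q` of the deleted letter, and this product is exactly
`B^k_m(q) g`. Peeling off the last letter repeatedly exhausts the word, and what remains is the
total mass, which is `1` for a simplex vector.
-/

theorem exists_mem_stdSimplex_sum_smul_eq {𝕜 ι : Type*} [Field 𝕜] [LinearOrder 𝕜]
    [IsStrictOrderedRing 𝕜] [Fintype ι] [Nonempty ι] {f : ι → 𝕜} (hf : 0 ≤ f) :
    ∃ p ∈ stdSimplex 𝕜 ι, (∑ i, f i) • p = f := by
  classical
  have sum_nonneg : 0 ≤ ∑ i, f i := Finset.sum_nonneg fun i _ => hf i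
  by_cases sum_zero : ∑ i, f i = 0
  · have f_zero : f = 0 := (Fintype.sum_eq_zero_iff_of_nonneg hf).1 sum_zero
    exact ⟨_, single_mem_stdSimplex 𝕜 (Classical.arbitrary ι), by simp [f_zero]⟩
  · refine ⟨(∑ i, f i)⁻¹ • f, ⟨fun i => ?_, ?_⟩, smul_inv_smul₀ sum_zero f⟩
    · exact mul_nonneg (inv_nonneg.2 sum_nonneg) (hf i)
    · simp only [Pi.smul_apply, smul_eq_mul, ← Finset.mul_sum, inv_mul_cancel₀ sum_zero]

theorem mulVec_apply_of_subsingleton {R m n : Type*} [NonUnitalNonAssocSemiring R] [Fintype n]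
    [Subsingleton n] (A : Matrix m n R) (v : n → R) (i : m) (j : n) :
    (A *ᵥ v) i = A i j * v j :=
  Fintype.sum_subsingleton (fun j => A i j * v j) j

theorem isSimplex_replicateCol_iff {n : ℕ} {p : Fin n → ℝ} :
    IsSimplex (replicateCol (Fin 1) p) ↔ p ∈ stdSimplex ℝ (Fin n) :=
  Iff.rfl

theorem isSimplex_eCol {n : ℕ} (i : Fin n) : IsSimplex (eCol n i) := by
  refine ⟨fun r => ?_, by simp [eCol]⟩
  simp only [eCol, of_apply]
  positivity

theorem castM_apply {a b a' b' : ℕ} (ha : a = a') (hb : b = b') (A : Matrix (Fin a) (Fin b) ℝ)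
    (i : Fin a') (j : Fin b') :
    castM ha hb A i j = A ((finCongr ha).symm i) ((finCongr hb).symm j) :=
  rfl

theorem kron_eq_reindex_kroneckerMap {a b c d : ℕ} (A : Matrix (Fin a) (Fin b) ℝ)
    (B : Matrix (Fin c) (Fin d) ℝ) :
    kron A B = reindex finProdFinEquiv finProdFinEquiv (kroneckerMap (· * ·) A B) :=
  rfl

theorem kron_finProdFinEquiv {a b c d : ℕ} (A : Matrix (Fin a) (Fin b) ℝ)
    (B : Matrix (Fin c) (Fin d) ℝ) (i : Fin a) (j : Fin b) (r : Fin c) (s : Fin d) :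
    kron A B (finProdFinEquiv (i, r)) (finProdFinEquiv (j, s)) = A i j * B r s := by
  simp [kron_eq_reindex_kroneckerMap]

section Branch

variable (N : ℕ) {k m : ℕ} (hm : m ≤ k)

/-- Concatenation of a word of length `m` and a word of length `k - m` over `Fin N`, words being
encoded by their base `N` value with the leading digit first. -/
def appendEquiv : Fin (N ^ m) × Fin (N ^ (k - m)) ≃ Fin (N ^ k) :=
  finProdFinEquiv.trans (finCongr (by rw [← pow_add, Nat.add_sub_cancel' hm]))

/-- Inserting a letter into a word of length `k` over `Fin N`, right after its first `m` letters.
Column `c` of a branching matrix `B^k_m` is supported on the rows `insertLetter N hm (c, s)`. -/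
def insertLetter : Fin (N ^ k) × Fin N ≃ Fin (N ^ (k + 1)) :=
  ((appendEquiv N hm).symm.prodCongr (Equiv.refl _)).trans <|
    (Equiv.prodAssoc _ _ _).trans <|
    ((Equiv.refl _).prodCongr (Equiv.prodComm _ _)).trans <|
    (Equiv.prodAssoc _ _ _).symm.trans <|
    (finProdFinEquiv.prodCongr (Equiv.refl _)).trans <|
    finProdFinEquiv.trans <|
    finCongr (by rw [← pow_succ, ← pow_add]; congr 1; omega)

variable {N}

theorem finCongr_pairIdx (h : N ^ m * N ^ (k - m) = N ^ k) (i : Fin (N ^ m))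
    (j : Fin (N ^ (k - m))) : finCongr h (pairIdx i j) = appendEquiv N hm (i, j) :=
  Fin.ext (add_comm _ _)

theorem finCongr_symm_appendEquiv (h : N ^ m * 1 * N ^ (k - m) = N ^ k) (i : Fin (N ^ m))
    (j : Fin (N ^ (k - m))) :
    (finCongr h).symm (appendEquiv N hm (i, j)) =
      finProdFinEquiv (finProdFinEquiv (i, 0), j) :=
  Fin.ext (by simp [appendEquiv])

theorem finCongr_symm_insertLetter_appendEquiv (h : N ^ m * N * N ^ (k - m) = N ^ (k + 1))
    (i : Fin (N ^ m)) (j : Fin (N ^ (k - m))) (s : Fin N) :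
    (finCongr h).symm (insertLetter N hm (appendEquiv N hm (i, j), s)) =
      finProdFinEquiv (finProdFinEquiv (i, s), j) :=
  Fin.ext (by simp [insertLetter])

theorem branch_insertLetter (q : Fin (N ^ k) → Matrix (Fin N) (Fin 1) ℝ)
    (c : Fin (N ^ k)) (s : Fin N) (c' : Fin (N ^ k)) :
    Branch N k m hm q (insertLetter N hm (c, s)) c' = if c = c' then q c s 0 else 0 := by
  obtain ⟨⟨i, j⟩, rfl⟩ := (appendEquiv N hm).surjective c
  obtain ⟨⟨i', j'⟩, rfl⟩ := (appendEquiv N hm).surjective c'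
  simp only [Branch, castM_apply, Matrix.sum_apply, finCongr_symm_appendEquiv,
    finCongr_symm_insertLetter_appendEquiv, kron_finProdFinEquiv, finCongr_pairIdx hm, EE, of_apply,
    (appendEquiv N hm).injective.eq_iff, Prod.mk.injEq, ite_and, ite_mul, mul_ite, one_mul, mul_one,
    zero_mul, mul_zero, Finset.sum_ite_eq, Finset.sum_ite_irrel, Finset.sum_const_zero,
    Finset.mem_univ, if_true]
  simp only [eq_comm, ← ite_and, and_comm]

theorem branch_mulVec_insertLetter (q : Fin (N ^ k) → Matrix (Fin N) (Fin 1) ℝ)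
    (g : Fin (N ^ k) → ℝ) (c : Fin (N ^ k)) (s : Fin N) :
    (Branch N k m hm q *ᵥ g) (insertLetter N hm (c, s)) = g c * q c s 0 := by
  simp [mulVec, dotProduct, branch_insertLetter, mul_comm]

theorem exists_branch_mulVec_eq [NeZero N] {f : Fin (N ^ (k + 1)) → ℝ} (hf : 0 ≤ f) :
    ∃ (q : Fin (N ^ k) → Matrix (Fin N) (Fin 1) ℝ) (g : Fin (N ^ k) → ℝ),
      (∀ c, IsSimplex (q c)) ∧ 0 ≤ g ∧ ∑ c, g c = ∑ r, f r ∧ Branch N k m hm q *ᵥ g = f := by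
  have conditional (c : Fin (N ^ k)) : ∃ p ∈ stdSimplex ℝ (Fin N),
      (∑ s, f (insertLetter N hm (c, s))) • p = fun s => f (insertLetter N hm (c, s)) :=
    exists_mem_stdSimplex_sum_smul_eq fun s => hf _
  choose p p_mem sum_smul_p using conditional
  refine ⟨fun c => replicateCol (Fin 1) (p c), fun c => ∑ s, f (insertLetter N hm (c, s)),
    fun c => isSimplex_replicateCol_iff.2 (p_mem c),
    fun c => Finset.sum_nonneg fun s _ => hf _, ?_, ?_⟩
  · rw [← (insertLetter N hm).sum_comp f, Fintype.sum_prod_type]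
  · ext r
    obtain ⟨⟨c, s⟩, rfl⟩ := (insertLetter N hm).surjective r
    rw [branch_mulVec_insertLetter]
    exact congrFun (sum_smul_p c) s

end Branch

section Chain

variable {N : ℕ}

theorem bChain_congr {Q Q' : (j : ℕ) → Fin (N ^ j) → Matrix (Fin N) (Fin 1) ℝ} {m n : ℕ}
    (h : ∀ j, m ≤ j → j ≤ m + n → Q j = Q' j) : BChain N Q m n = BChain N Q' m n := by
  induction n with
  | zero => rw [BChain, BChain, h m le_rfl le_rfl]
  | succ n ih =>
    rw [BChain, BChain, h (m + n + 1) (by omega) le_rfl, ih fun j hmj hj => h j hmj (by omega)]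

theorem isSimplex_update {Q : (j : ℕ) → Fin (N ^ j) → Matrix (Fin N) (Fin 1) ℝ} {m : ℕ}
    {q : Fin (N ^ m) → Matrix (Fin N) (Fin 1) ℝ} (hQ : ∀ j i, IsSimplex (Q j i))
    (hq : ∀ i, IsSimplex (q i)) (j : ℕ) (i : Fin (N ^ j)) :
    IsSimplex (Function.update Q m q j i) :=
  (Function.forall_update_iff Q fun j (Q' : Fin (N ^ j) → _) => ∀ i, IsSimplex (Q' i)).2
    ⟨hq, fun j _ => hQ j⟩ j i

theorem exists_bChain_mulVec_eq [NeZero N] (m n : ℕ) {f : Fin (N ^ (m + n + 1)) → ℝ}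
    (hf : 0 ≤ f) :
    ∃ (Θ : (j : ℕ) → Fin (N ^ j) → Matrix (Fin N) (Fin 1) ℝ) (g : Fin (N ^ m) → ℝ),
      (∀ j i, IsSimplex (Θ j i)) ∧ ∑ c, g c = ∑ r, f r ∧ BChain N Θ m n *ᵥ g = f := by
  induction n with
  | zero =>
    obtain ⟨q, g, hq, -, sum_g, branch_g⟩ := exists_branch_mulVec_eq (le_refl m) hf
    refine ⟨Function.update (fun _ _ => eCol N 0) m q, g,
      isSimplex_update (fun _ _ => isSimplex_eCol 0) hq, sum_g, ?_⟩
    rw [BChain, Function.update_self, branch_g]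
  | succ n ih =>
    obtain ⟨q, f', hq, hf', sum_f', branch_f'⟩ := exists_branch_mulVec_eq (le_refl (m + n + 1)) hf
    obtain ⟨Θ, g, hΘ, sum_g, chain_g⟩ := ih hf'
    have chain_update : BChain N (Function.update Θ (m + n + 1) q) m n = BChain N Θ m n :=
      bChain_congr fun j _ hj => Function.update_of_ne (by omega) _ _
    refine ⟨Function.update Θ (m + n + 1) q, g, isSimplex_update hΘ hq, sum_g.trans sum_f', ?_⟩
    rw [BChain, Function.update_self, chain_update, ← mulVec_mulVec, chain_g, branch_f']

end Chain

/-- existence of the branching factorization of a simplex vector: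
every `θ ∈ Δ_{N^k}` can be written as
`θ = B^{k-1}_{k-1}(Θ^(k-1)) ⋯ B^0_0(Θ^(0))` with tuples `Θ^(m)` of vectors in `Δ_N`. -/
theorem stmt9 (N k : ℕ) (hN : 1 ≤ N) (hk : 1 ≤ k)
    (θ : Matrix (Fin (N ^ k)) (Fin 1) ℝ) (hθ : IsSimplex θ) :
    ∃ Θ : (m : ℕ) → Fin (N ^ m) → Matrix (Fin N) (Fin 1) ℝ,
      (∀ m, m ≤ k - 1 → ∀ i, IsSimplex (Θ m i)) ∧
      θ = castM (congrArg (N ^ ·) (by omega)) (by norm_num) (BChain N Θ 0 (k - 1)) := by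
  have : NeZero N := ⟨by omega⟩
  let e : Fin (N ^ (0 + (k - 1) + 1)) ≃ Fin (N ^ k) := finCongr (congrArg (N ^ ·) (by omega))
  obtain ⟨Θ, g, hΘ, sum_g, chain_g⟩ :=
    exists_bChain_mulVec_eq 0 (k - 1) (f := fun r => θ (e r) 0) fun r => hθ.1 _
  have : Subsingleton (Fin (N ^ 0)) := inferInstanceAs (Subsingleton (Fin 1))
  have g_eq_one (c : Fin (N ^ 0)) : g c = 1 := by
    rw [← Fintype.sum_subsingleton g c, sum_g, e.sum_comp fun r => θ r 0, hθ.2]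
  refine ⟨Θ, fun m _ => hΘ m, ?_⟩
  ext r c
  let c' : Fin (N ^ 0) := (finCongr (pow_zero N)).symm c
  calc θ r c = (BChain N Θ 0 (k - 1) *ᵥ g) (e.symm r) := by
        simp only [chain_g, e.apply_symm_apply, Fin.fin_one_eq_zero c]
    _ = BChain N Θ 0 (k - 1) (e.symm r) c' * g c' := mulVec_apply_of_subsingleton ..
    _ = BChain N Θ 0 (k - 1) (e.symm r) c' := by rw [g_eq_one, mul_one]
    _ = castM _ _ (BChain N Θ 0 (k - 1)) r c := (castM_apply ..).symm
end
end

section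
/- Let N ≥ 1 and k ≥ 1, and let θ ∈ Δ_{N^k} have all entries strictly positive. Then the tuples Θ^(m) = (θ^(m)_1, …, θ^(m)_{N^m}) of vectors in Δ_N (m = 0, 1, …, k-1) satisfying θ = B^{k-1}_{k-1}(Θ^(k-1)) B^{k-2}_{k-2}(Θ^(k-2)) ⋯ B^0_0(Θ^(0)) are unique: if two families of such tuples both yield θ, they coincide. -/
open Matrix BigOperators Filter Topology

noncomputable section

/-!
Read `Fin (N ^ n)` as the nodes at depth `n` of the `N`-ary tree, and `Θ m i` as the transition
weights from the node `i` at depth `m` to its children. The entries of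
`B^{n-1}_{n-1}(Θ^(n-1)) ⋯ B^0_0(Θ^(0))` are then the products of the weights along the paths from
the root. Since each `Θ m i` sums to `1`, the product at a node is the sum of the products at its
children, so `θ` determines the products at every depth, and they inherit its positivity. Finally
`Θ m i` is the ratio of the products at the children of `i` to the product at `i`.
-/

/-- The node `i` at depth `n` of the `N`-ary tree together with a letter `s` is identified with the
`s`-th child of `i`, in the row-major order of `kron`: the child has index `N * i + s`. -/
def childEquiv (N n : ℕ) : Fin (N ^ n) × Fin N ≃ Fin (N ^ (n + 1)) :=
  finProdFinEquiv.trans (finCongr (pow_succ N n).symm)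

section PathWeight

variable {N : ℕ} {R : Type*}

/-- The product of the transition weights `Q` along the path from the root of the `N`-ary tree to a
node at depth `n`. For simplex vectors `Q` it is the probability that the branching process visits
that node. -/
def pathWeight [MulOneClass R] (Q : (j : ℕ) → Fin (N ^ j) → Matrix (Fin N) (Fin 1) R) :
    (n : ℕ) → Fin (N ^ n) → R
  | 0, _ => 1
  | n + 1, a =>
    Q n ((childEquiv N n).symm a).1 ((childEquiv N n).symm a).2 0 *
      pathWeight Q n ((childEquiv N n).symm a).1

theorem pathWeight_succ_childEquiv [MulOneClass R]
    (Q : (j : ℕ) → Fin (N ^ j) → Matrix (Fin N) (Fin 1) R) (n : ℕ) (i : Fin (N ^ n)) (s : Fin N) :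
    pathWeight Q (n + 1) (childEquiv N n (i, s)) = Q n i s 0 * pathWeight Q n i := by
  simp [pathWeight]

theorem sum_pathWeight_childEquiv [NonAssocSemiring R]
    {Q : (j : ℕ) → Fin (N ^ j) → Matrix (Fin N) (Fin 1) R} {n : ℕ} {i : Fin (N ^ n)}
    (hQ : ∑ s, Q n i s 0 = 1) :
    ∑ s, pathWeight Q (n + 1) (childEquiv N n (i, s)) = pathWeight Q n i := by
  simp only [pathWeight_succ_childEquiv, ← Finset.sum_mul, hQ, one_mul]

theorem pathWeight_eq_of_le [NonAssocSemiring R]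
    {Q Q' : (j : ℕ) → Fin (N ^ j) → Matrix (Fin N) (Fin 1) R} {m n : ℕ} (hmn : m ≤ n)
    (hQ : ∀ j < n, ∀ i, ∑ s, Q j i s 0 = 1) (hQ' : ∀ j < n, ∀ i, ∑ s, Q' j i s 0 = 1)
    (h : pathWeight Q n = pathWeight Q' n) : pathWeight Q m = pathWeight Q' m := by
  induction hmn using Nat.decreasingInduction with
  | self => exact h
  | of_succ j hj ih =>
    ext i
    rw [← sum_pathWeight_childEquiv (hQ j hj i), ← sum_pathWeight_childEquiv (hQ' j hj i), ih]

theorem pathWeight_pos_of_le [NonAssocSemiring R] [Nontrivial R] [PartialOrder R]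
    [IsOrderedCancelAddMonoid R]
    {Q : (j : ℕ) → Fin (N ^ j) → Matrix (Fin N) (Fin 1) R} {m n : ℕ} (hmn : m ≤ n)
    (hQ : ∀ j < n, ∀ i, ∑ s, Q j i s 0 = 1) (hpos : ∀ a, 0 < pathWeight Q n a) :
    ∀ i, 0 < pathWeight Q m i := by
  induction hmn using Nat.decreasingInduction with
  | self => exact hpos
  | of_succ j hj ih =>
    intro i
    have hne : (Finset.univ : Finset (Fin N)).Nonempty :=
      Finset.nonempty_of_sum_ne_zero ((hQ j hj i).trans_ne one_ne_zero)
    rw [← sum_pathWeight_childEquiv (hQ j hj i)]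
    exact Finset.sum_pos (fun s _ => ih _) hne

theorem eq_of_pathWeight_succ_eq [MonoidWithZero R] [IsRightCancelMulZero R]
    {Q Q' : (j : ℕ) → Fin (N ^ j) → Matrix (Fin N) (Fin 1) R} {n : ℕ}
    (h : pathWeight Q n = pathWeight Q' n) (hsucc : pathWeight Q (n + 1) = pathWeight Q' (n + 1))
    {i : Fin (N ^ n)} (hi : pathWeight Q n i ≠ 0) : Q n i = Q' n i := by
  ext s t
  rw [Subsingleton.elim t 0]
  refine mul_right_cancel₀ hi ?_
  rw [← pathWeight_succ_childEquiv, hsucc, pathWeight_succ_childEquiv, h]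

end PathWeight

section Kronecker

variable {a b c d : ℕ}

theorem kron_finProdFinEquiv_apply (A : Matrix (Fin a) (Fin b) ℝ) (B : Matrix (Fin c) (Fin d) ℝ)
    (i : Fin a) (k : Fin c) (j : Fin b) (l : Fin d) :
    kron A B (finProdFinEquiv (i, k)) (finProdFinEquiv (j, l)) = A i j * B k l := by
  have hrow := finProdFinEquiv.symm_apply_apply (i, k)
  have hcol := finProdFinEquiv.symm_apply_apply (j, l)
  simp only [finProdFinEquiv_symm_apply, Prod.mk.injEq] at hrow hcol
  simp only [kron, Matrix.of_apply, hrow, hcol]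

theorem sum_kron_kron_EE_finProdFinEquiv_apply (q : Fin a → Fin c → Matrix (Fin b) (Fin d) ℝ)
    (i i' : Fin a) (s : Fin b) (t : Fin d) (j j' : Fin c) :
    (∑ x, ∑ y, kron (kron (EE a x) (q x y)) (EE c y))
        (finProdFinEquiv (finProdFinEquiv (i, s), j))
        (finProdFinEquiv (finProdFinEquiv (i', t), j')) =
      if i = i' ∧ j = j' then q i j s t else 0 := by
  by_cases hi : i = i' <;>
    simp [Matrix.sum_apply, kron_finProdFinEquiv_apply, EE, ite_and, hi, eq_comm]

end Kronecker

section Branching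

variable {N : ℕ}

theorem Branch_self_childEquiv_apply (n : ℕ) (q : Fin (N ^ n) → Matrix (Fin N) (Fin 1) ℝ)
    (i c : Fin (N ^ n)) (s : Fin N) :
    Branch N n n le_rfl q (childEquiv N n (i, s)) c = if i = c then q i s 0 else 0 := by
  -- `N ^ (n - n)` equals `1` only propositionally, so the trailing index has to be carried along.
  let j : Fin (N ^ (n - n)) := ⟨0, by simp⟩
  have hrow (h : N ^ n * N * N ^ (n - n) = N ^ (n + 1)) :
      (finCongr h).symm (childEquiv N n (i, s)) = finProdFinEquiv (finProdFinEquiv (i, s), j) := by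
    ext; simp [childEquiv, j]
  have hcol (h : N ^ n * 1 * N ^ (n - n) = N ^ n) :
      (finCongr h).symm c = finProdFinEquiv (finProdFinEquiv (c, (0 : Fin 1)), j) := by
    ext; simp [j]
  have hnode (h : N ^ n * N ^ (n - n) = N ^ n) : finCongr h (pairIdx i j) = i := by
    ext; simp [pairIdx, j]
  rw [Branch, castM, Matrix.reindex_apply, Matrix.submatrix_apply, hrow, hcol,
    sum_kron_kron_EE_finProdFinEquiv_apply fun i j => q (finCongr _ (pairIdx i j)), hnode]
  simp only [and_true]

theorem Branch_self_mulVec_childEquiv (n : ℕ) (q : Fin (N ^ n) → Matrix (Fin N) (Fin 1) ℝ)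
    (v : Fin (N ^ n) → ℝ) (i : Fin (N ^ n)) (s : Fin N) :
    (Branch N n n le_rfl q *ᵥ v) (childEquiv N n (i, s)) = q i s 0 * v i := by
  simp [Matrix.mulVec, dotProduct, Branch_self_childEquiv_apply]

variable (Q : (j : ℕ) → Fin (N ^ j) → Matrix (Fin N) (Fin 1) ℝ)

theorem Branch_self_mulVec_pathWeight (n : ℕ) :
    Branch N n n le_rfl (Q n) *ᵥ pathWeight Q n = pathWeight Q (n + 1) := by
  ext a
  obtain ⟨⟨i, s⟩, rfl⟩ := (childEquiv N n).surjective a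
  rw [Branch_self_mulVec_childEquiv, pathWeight_succ_childEquiv]

theorem BChain_mulVec_pathWeight (m n : ℕ) :
    BChain N Q m n *ᵥ pathWeight Q m = pathWeight Q (m + n + 1) := by
  induction n with
  | zero => exact Branch_self_mulVec_pathWeight Q m
  | succ n ih => rw [BChain, ← Matrix.mulVec_mulVec, ih]; exact Branch_self_mulVec_pathWeight Q _

theorem BChain_zero_apply (n : ℕ) (a : Fin (N ^ (0 + n + 1))) (b : Fin (N ^ 0)) :
    BChain N Q 0 n a b = pathWeight Q (0 + n + 1) a := by
  have : Subsingleton (Fin (N ^ 0)) := (finCongr (pow_zero N)).subsingleton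
  rw [← BChain_mulVec_pathWeight, Matrix.mulVec, dotProduct, Fintype.sum_subsingleton _ b,
    pathWeight, mul_one]

theorem castM_BChain_zero_apply {n k c : ℕ} (hk : 0 + n + 1 = k) (hc : N ^ 0 = c) (a : Fin (N ^ k))
    (b : Fin c) :
    castM (congrArg (N ^ ·) hk) hc (BChain N Q 0 n) a b = pathWeight Q k a := by
  subst hk
  exact BChain_zero_apply Q n a _

end Branching

theorem stmt10_general (N k : ℕ) (hk : 1 ≤ k) (θ : Matrix (Fin (N ^ k)) (Fin 1) ℝ)
    (Θ Θ' : (m : ℕ) → Fin (N ^ m) → Matrix (Fin N) (Fin 1) ℝ)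
    (hΘ : ∀ m, m ≤ k - 1 → ∀ i, ∑ s, Θ m i s 0 = 1)
    (hΘ' : ∀ m, m ≤ k - 1 → ∀ i, ∑ s, Θ' m i s 0 = 1)
    (hfac : θ = castM (congrArg (N ^ ·) (by omega)) (by norm_num) (BChain N Θ 0 (k - 1)))
    (hfac' : θ = castM (congrArg (N ^ ·) (by omega)) (by norm_num) (BChain N Θ' 0 (k - 1))) :
    ∀ m, m ≤ k - 1 → ∀ i, pathWeight Θ m i ≠ 0 → Θ m i = Θ' m i := by
  intro m hm i hi
  have hθ : ∀ a, θ a 0 = pathWeight Θ k a := fun a =>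
    (congrFun₂ hfac a 0).trans (castM_BChain_zero_apply Θ (by omega) _ a 0)
  have hθ' : ∀ a, θ a 0 = pathWeight Θ' k a := fun a =>
    (congrFun₂ hfac' a 0).trans (castM_BChain_zero_apply Θ' (by omega) _ a 0)
  have hleaves : pathWeight Θ k = pathWeight Θ' k := funext fun a => (hθ a).symm.trans (hθ' a)
  have hlevel : ∀ j ≤ k, pathWeight Θ j = pathWeight Θ' j := fun j hj =>
    pathWeight_eq_of_le hj (fun l hl => hΘ l (by omega)) (fun l hl => hΘ' l (by omega)) hleaves
  exact eq_of_pathWeight_succ_eq (hlevel m (by omega)) (hlevel (m + 1) (by omega)) hi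

/-- uniqueness of the branching factorization for strictly positive `θ`. -/
theorem stmt10 (N k : ℕ) (hN : 1 ≤ N) (hk : 1 ≤ k)
    (θ : Matrix (Fin (N ^ k)) (Fin 1) ℝ) (hθ : IsSimplex θ) (hpos : ∀ i, 0 < θ i 0)
    (Θ Θ' : (m : ℕ) → Fin (N ^ m) → Matrix (Fin N) (Fin 1) ℝ)
    (hΘ : ∀ m, m ≤ k - 1 → ∀ i, IsSimplex (Θ m i))
    (hΘ' : ∀ m, m ≤ k - 1 → ∀ i, IsSimplex (Θ' m i))
    (hfac : θ = castM (congrArg (N ^ ·) (by omega)) (by norm_num) (BChain N Θ 0 (k - 1)))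
    (hfac' : θ = castM (congrArg (N ^ ·) (by omega)) (by norm_num) (BChain N Θ' 0 (k - 1))) :
    ∀ m, m ≤ k - 1 → ∀ i, Θ m i = Θ' m i := by
  intro m hm i
  have hleaves : ∀ a, 0 < pathWeight Θ k a := fun a =>
    (hpos a).trans_eq ((congrFun₂ hfac a 0).trans (castM_BChain_zero_apply Θ (by omega) _ a 0))
  have hi : 0 < pathWeight Θ m i :=
    pathWeight_pos_of_le (by omega) (fun j hj i => (hΘ j (by omega) i).2) hleaves i
  exact stmt10_general N k hk θ Θ Θ' (fun j hj i => (hΘ j hj i).2) (fun j hj i => (hΘ' j hj i).2)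
    hfac hfac' m hm i hi.ne'
end
end
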